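/- arXiv:2410.23131 — 2 statements merged into one kernel-verified Lean document; each statement's English description precedes it below -/
import Mathlib

section
/- Let I and P be positive integers, and let η, L > 0 satisfy η ≤ 1/(60·L·I·P); set q₁ = 18·η²·L²·I and q₂ = 15·η²·L²·I·P. Let a₀,…,a_{P−1} and b₀,…,b_{P−1} be nonnegative reals (with the convention a_s = b_s = 0 for s ≥ P). Suppose d, m : {0,…,I·P} → [0,∞) satisfy d₀ = m₀ = 0, d_t = 0 whenever k_t = 0, and for every 1 ≤ t ≤ I·P: m_t ≤ (1 + 1/(I·P))·m_{t−1} + q₂·d_{t−1} + b_{r_{t−1}}, and if k_t ≠ 0 then d_t ≤ (1 + 1/I)·d_{t−1} + q₁·m_{t−1} + a_{r_{t−1}}. Then for every 0 ≤ t ≤ I·P: d_t ≤ 2·I·a_{r_t} + 24·q₁·q₂·I³·Σ_{s=0}^{r_t} a_s + 36·q₁·I²·P·Σ_{s=0}^{r_t} b_s. -/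
open Finset

lemma aux_pow_le_three (n k : ℕ) (hn : 0 < n) (hk : k ≤ n) : (1 + 1 / (n : ℝ)) ^ k ≤ 3 := by
  have hn' : (0 : ℝ) < n := by exact_mod_cast hn
  have h1 : (1 + 1 / (n : ℝ)) ≤ Real.exp (1 / n) := by
    have := Real.add_one_le_exp (1 / (n : ℝ))
    linarith
  have h0 : (1 : ℝ) ≤ 1 + 1 / (n : ℝ) := by
    have : 0 < 1 / (n : ℝ) := by positivity
    linarith
  calc (1 + 1 / (n : ℝ)) ^ k ≤ (1 + 1 / (n : ℝ)) ^ n := pow_le_pow_right₀ h0 hk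
    _ ≤ (Real.exp (1 / n)) ^ n := by gcongr
    _ = Real.exp 1 := by
      rw [← Real.exp_nat_mul]
      congr 1
      field_simp
    _ ≤ 3 := by
      have := Real.exp_one_lt_d9
      linarith

lemma aux_block (I : ℕ) (hI : 0 < I) (f : ℕ → ℝ) (n : ℕ) :
    ∑ j ∈ range (I * n), f (j / I) = I * ∑ s ∈ range n, f s := by
  induction n with
  | zero => simp
  | succ n ih =>
    rw [Nat.mul_succ, Finset.sum_range_add, ih, Finset.sum_range_succ, mul_add]
    congr 1
    have : ∀ x ∈ range I, f ((I * n + x) / I) = f n := by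
      intro x hx
      rw [Nat.mul_add_div hI, Nat.div_eq_of_lt (Finset.mem_range.1 hx), add_zero]
    rw [Finset.sum_congr rfl this]
    simp

lemma aux_block_le (I : ℕ) (hI : 0 < I) (f : ℕ → ℝ) (hf : ∀ s, 0 ≤ f s) (t : ℕ) :
    ∑ j ∈ range t, f (j / I) ≤ I * ∑ s ∈ range (t / I + 1), f s := by
  rw [← aux_block I hI]
  apply Finset.sum_le_sum_of_subset_of_nonneg
  · apply Finset.range_subset_range.2
    have := Nat.lt_mul_div_succ t hI
    exact this.le
  · intro i _ _
    exact hf _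

/-- Unrolled recursion bound on the client-drift quantity `d` from the proof of
Lemma 1 (Amplified SCAFFOLD).  Here `r_t = t / I` and `k_t = t % I`. -/
theorem drift_recursion_bound_d
    (I P : ℕ) (hI : 0 < I) (hP : 0 < P)
    (η L : ℝ) (hη : 0 < η) (hL : 0 < L)
    (hηle : η ≤ 1 / (60 * L * I * P))
    (q₁ q₂ : ℝ)
    (hq₁ : q₁ = 18 * η ^ 2 * L ^ 2 * I)
    (hq₂ : q₂ = 15 * η ^ 2 * L ^ 2 * I * P)
    (a b : ℕ → ℝ)
    (ha0 : ∀ s, 0 ≤ a s) (hb0 : ∀ s, 0 ≤ b s)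
    (haP : ∀ s, P ≤ s → a s = 0) (hbP : ∀ s, P ≤ s → b s = 0)
    (d m : ℕ → ℝ)
    (hd0 : ∀ t, t ≤ I * P → 0 ≤ d t) (hm0 : ∀ t, t ≤ I * P → 0 ≤ m t)
    (hdinit : d 0 = 0) (hminit : m 0 = 0)
    (hdk : ∀ t, t ≤ I * P → t % I = 0 → d t = 0)
    (hmrec : ∀ t, 1 ≤ t → t ≤ I * P →
      m t ≤ (1 + 1 / ((I : ℝ) * P)) * m (t - 1) + q₂ * d (t - 1) + b ((t - 1) / I))
    (hdrec : ∀ t, 1 ≤ t → t ≤ I * P → t % I ≠ 0 →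
      d t ≤ (1 + 1 / (I : ℝ)) * d (t - 1) + q₁ * m (t - 1) + a ((t - 1) / I)) :
    ∀ t, t ≤ I * P →
      d t ≤ 2 * I * a (t / I) + 24 * q₁ * q₂ * I ^ 3 * ∑ s ∈ Finset.range (t / I + 1), a s
        + 36 * q₁ * I ^ 2 * P * ∑ s ∈ Finset.range (t / I + 1), b s := by
  have hI' : (0 : ℝ) < I := by exact_mod_cast hI
  have hP' : (1 : ℝ) ≤ P := by exact_mod_cast hP
  have hP0 : (0 : ℝ) < P := by linarith
  have hq1 : 0 ≤ q₁ := by rw [hq₁]; positivity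
  have hq2 : 0 ≤ q₂ := by rw [hq₂]; positivity
  have heps : q₁ * q₂ * I ^ 2 * P ≤ 1 / 42 := by
    have hy : η * L * I * P ≤ 1 / 60 := by
      rw [le_div_iff₀ (by positivity)] at hηle
      linarith
    have hy0 : 0 ≤ η * L * I * P := by positivity
    have h4 : (η * L * I * P) ^ 4 ≤ (1 / 60) ^ 4 := by gcongr
    have h2 : q₁ * q₂ * I ^ 2 * P = 270 * ((η * L * I) ^ 4 * (P : ℝ) ^ 2) := by
      rw [hq₁, hq₂]; ring
    have h3 : (η * L * I) ^ 4 * (P : ℝ) ^ 2 ≤ (η * L * I) ^ 4 * (P : ℝ) ^ 4 := by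
      gcongr
      norm_num
    rw [h2]
    rw [← mul_pow] at h3
    norm_num at h4
    linarith
  set M : ℕ → ℝ := fun r => 7 * q₂ * I ^ 2 * ∑ s ∈ range (r + 1), a s
    + 4 * I * ∑ s ∈ range (r + 1), b s with hM
  have hA0 : ∀ n, 0 ≤ ∑ s ∈ range n, a s := fun n => Finset.sum_nonneg (fun s _ => ha0 s)
  have hB0 : ∀ n, 0 ≤ ∑ s ∈ range n, b s := fun n => Finset.sum_nonneg (fun s _ => hb0 s)
  have hM0 : ∀ r, 0 ≤ M r := by
    intro r
    have := hA0 (r + 1)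
    have := hB0 (r + 1)
    simp only [hM]
    positivity
  have hMmono : ∀ s r, s ≤ r → M s ≤ M r := by
    intro s r hsr
    have h1 : ∑ s ∈ range (s + 1), a s ≤ ∑ s ∈ range (r + 1), a s :=
      Finset.sum_le_sum_of_subset_of_nonneg (Finset.range_subset_range.2 (by omega))
        (fun i _ _ => ha0 i)
    have h2 : ∑ s ∈ range (s + 1), b s ≤ ∑ s ∈ range (r + 1), b s :=
      Finset.sum_le_sum_of_subset_of_nonneg (Finset.range_subset_range.2 (by omega))
        (fun i _ _ => hb0 i)
    simp only [hM]
    gcongr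
  set f : ℕ → ℝ := fun s => q₂ * (2 * I * (a s + q₁ * M s)) + b s with hf
  have hf0 : ∀ s, 0 ≤ f s := by
    intro s
    have := hM0 s
    have := ha0 s
    have := hb0 s
    simp only [hf]
    positivity
  set g : ℝ := 1 + 1 / ((I : ℝ) * P) with hg
  have hg1 : 1 ≤ g := by
    have : 0 < 1 / ((I : ℝ) * P) := by positivity
    linarith
  have hgt : ∀ t, t ≤ I * P → g ^ t ≤ 3 := by
    intro t ht
    have := aux_pow_le_three (I * P) t (Nat.mul_pos hI hP) ht
    push_cast at this
    exact this
  have hSM : ∀ t, t < I * P → g ^ t * ∑ j ∈ range t, f (j / I) ≤ M (t / I) := by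
    intro t ht
    have hr : t / I + 1 ≤ P := by
      have : t / I < P := Nat.div_lt_of_lt_mul ht
      omega
    generalize hrr : t / I = r at hr
    have h1 := aux_block_le I hI f hf0 t
    rw [hrr] at h1
    have h2 : ∑ s ∈ range (r + 1), f s ≤ q₂ * (2 * I) * ∑ s ∈ range (r + 1), a s
        + P * (q₂ * (2 * I) * q₁ * M r) + ∑ s ∈ range (r + 1), b s := by
      have e1 : ∑ s ∈ range (r + 1), f s ≤
          ∑ s ∈ range (r + 1), (q₂ * (2 * I) * a s + q₂ * (2 * I) * q₁ * M r + b s) := by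
        apply Finset.sum_le_sum
        intro s hs
        have h := hMmono s r (by have := Finset.mem_range.1 hs; omega)
        have h' : q₂ * (2 * I) * q₁ * M s ≤ q₂ * (2 * I) * q₁ * M r := by gcongr
        simp only [hf]
        linarith
      have e3 : ∑ s ∈ range (r + 1), (q₂ * (2 * I) * a s + q₂ * (2 * I) * q₁ * M r + b s)
          = q₂ * (2 * I) * ∑ s ∈ range (r + 1), a s
            + ((r + 1 : ℕ) : ℝ) * (q₂ * (2 * I) * q₁ * M r) + ∑ s ∈ range (r + 1), b s := by
        rw [Finset.sum_add_distrib, Finset.sum_add_distrib, ← Finset.mul_sum, Finset.sum_const,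
          Finset.card_range, nsmul_eq_mul]
      have e2 : ((r + 1 : ℕ) : ℝ) * (q₂ * (2 * I) * q₁ * M r)
          ≤ P * (q₂ * (2 * I) * q₁ * M r) := by
        have : ((r + 1 : ℕ) : ℝ) ≤ P := by exact_mod_cast hr
        have := hM0 r
        gcongr
      linarith
    have hS0 : 0 ≤ ∑ j ∈ range t, f (j / I) := Finset.sum_nonneg (fun j _ => hf0 _)
    have h3 : g ^ t * ∑ j ∈ range t, f (j / I) ≤ 3 * ∑ j ∈ range t, f (j / I) :=
      mul_le_mul_of_nonneg_right (hgt t ht.le) hS0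
    have h4 : (I : ℝ) * ∑ s ∈ range (r + 1), f s ≤ I * (q₂ * (2 * I) * ∑ s ∈ range (r + 1), a s
        + P * (q₂ * (2 * I) * q₁ * M r) + ∑ s ∈ range (r + 1), b s) := by gcongr
    have h5 : (q₁ * q₂ * I ^ 2 * P) * M r ≤ 1 / 42 * M r :=
      mul_le_mul_of_nonneg_right heps (hM0 r)
    have h6 : M r = 7 * (q₂ * I ^ 2 * ∑ s ∈ range (r + 1), a s)
        + 4 * (I * ∑ s ∈ range (r + 1), b s) := by simp only [hM]; ring
    have h7 : 0 ≤ q₂ * I ^ 2 * ∑ s ∈ range (r + 1), a s := by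
      have := hA0 (r + 1)
      positivity
    have h8 : 0 ≤ I * ∑ s ∈ range (r + 1), b s := by
      have := hB0 (r + 1)
      positivity
    nlinarith
  set x : ℕ → ℝ := fun k => (1 + 1 / (I : ℝ)) ^ k - 1 with hx
  have hx0 : ∀ k, 0 ≤ x k := by
    intro k
    have h0 : (1 : ℝ) ≤ 1 + 1 / (I : ℝ) := by
      have : 0 < 1 / (I : ℝ) := by positivity
      linarith
    have := one_le_pow₀ h0 (n := k)
    simp only [hx]
    linarith
  have hx2 : ∀ k, k ≤ I → x k ≤ 2 := by
    intro k hk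
    have := aux_pow_le_three I k hI hk
    simp only [hx]
    linarith
  have hZ0 : ∀ r, 0 ≤ a r + q₁ * M r := fun r => by
    have := hM0 r
    have := ha0 r
    positivity
  have hD : ∀ t, I * x (t % I) * (a (t / I) + q₁ * M (t / I))
      ≤ 2 * I * (a (t / I) + q₁ * M (t / I)) := by
    intro t
    have h1 := hx2 (t % I) (Nat.mod_lt t hI).le
    have h2 := hZ0 (t / I)
    apply mul_le_mul_of_nonneg_right _ h2
    nlinarith
  have key : ∀ t, t ≤ I * P → d t ≤ I * x (t % I) * (a (t / I) + q₁ * M (t / I)) ∧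
      m t ≤ g ^ t * ∑ j ∈ range t, f (j / I) := by
    intro t
    induction t with
    | zero => 
      intro _
      simp [hx, hdinit, hminit]
    | succ t ih =>
      intro ht
      obtain ⟨ihd, ihm⟩ := ih (by omega)
      have hmM := ihm.trans (hSM t (by omega))
      have hdD := ihd.trans (hD t)
      constructor
      · by_cases hk : (t + 1) % I = 0
        · rw [hdk _ ht hk]
          exact mul_nonneg (mul_nonneg hI'.le (hx0 _)) (hZ0 _)
        · have hrec := hdrec (t + 1) (by omega) ht hk
          rw [Nat.add_sub_cancel] at hrec
          have hnd : ¬ I ∣ t + 1 := fun h => hk (Nat.mod_eq_zero_of_dvd h)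
          have hdiv : (t + 1) / I = t / I := Nat.succ_div_of_not_dvd hnd
          have hmod : (t + 1) % I = t % I + 1 := by
            have e1 := Nat.div_add_mod (t + 1) I
            have e2 := Nat.div_add_mod t I
            rw [hdiv] at e1
            omega
          rw [hdiv, hmod]
          have h1 : (1 + 1 / (I : ℝ)) * d t ≤
              (1 + 1 / (I : ℝ)) * (I * x (t % I) * (a (t / I) + q₁ * M (t / I))) := by
            gcongr
          have h2 : q₁ * m t ≤ q₁ * M (t / I) := by gcongr
          have h3 : I * x (t % I + 1) * (a (t / I) + q₁ * M (t / I)) =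
              (1 + 1 / (I : ℝ)) * (I * x (t % I) * (a (t / I) + q₁ * M (t / I)))
              + (a (t / I) + q₁ * M (t / I)) := by
            simp only [hx, pow_succ]
            field_simp
            ring
          rw [h3]
          linarith
      · have hrec := hmrec (t + 1) (by omega) ht
        rw [Nat.add_sub_cancel] at hrec
        have h1 : g * m t ≤ g * (g ^ t * ∑ j ∈ range t, f (j / I)) := by gcongr
        have h2 : q₂ * d t ≤ q₂ * (2 * I * (a (t / I) + q₁ * M (t / I))) := by gcongr
        have h3 : f (t / I) ≤ g ^ (t + 1) * f (t / I) :=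
          le_mul_of_one_le_left (hf0 _) (one_le_pow₀ hg1)
        have h4 : f (t / I) = q₂ * (2 * I * (a (t / I) + q₁ * M (t / I))) + b (t / I) := rfl
        rw [Finset.sum_range_succ, mul_add]
        have h5 : g ^ (t + 1) * ∑ j ∈ range t, f (j / I)
          = g * (g ^ t * ∑ j ∈ range t, f (j / I)) := by ring
        rw [h5]
        linarith
  intro t ht
  have h1 := (key t ht).1.trans (hD t)
  generalize t / I = r at h1 ⊢
  have h6 : M r = 7 * q₂ * I ^ 2 * (∑ s ∈ range (r + 1), a s)
        + 4 * I * ∑ s ∈ range (r + 1), b s := rfl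
  rw [h6] at h1
  have h7 : 0 ≤ q₁ * q₂ * I ^ 3 * ∑ s ∈ range (r + 1), a s := by
    have := hA0 (r + 1)
    positivity
  have h8 : 0 ≤ q₁ * I ^ 2 * ∑ s ∈ range (r + 1), b s := by
    have := hB0 (r + 1)
    positivity
  have h9 : q₁ * I ^ 2 * ∑ s ∈ range (r + 1), b s
      ≤ P * (q₁ * I ^ 2 * ∑ s ∈ range (r + 1), b s) := le_mul_of_one_le_left h8 hP'
  linarith
end

section
/- Let I and P be positive integers, let η, L > 0 satisfy η ≤ 1/(60·L·I·P), and set q₁ = 18·η²·L²·I and q₂ = 15·η²·L²·I·P. Fix an integer s with 0 ≤ s ≤ P−1 and define β_{s,t} for s·I ≤ t ≤ I·P by: β_{s,s·I} = 0, and for s·I ≤ t < I·P, β_{s,t+1} = (1 + 1/(I·P))·β_{s,t} + 𝟙{s = r_t}·(q₂/P)·((1 + 1/I)^{k_t} − 1) + q₁·q₂·Σ_{i=0}^{k_t−2} (1 + 1/I)^i·β_{s,t−1−i} (empty sums being zero). Then β_{s,t} ≤ 12·q₂·I/P for all s·I ≤ t ≤ I·P. -/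
open Finset

theorem one_add_pow_le_three (m k : ℕ) (hm : 0 < m) (hk : k ≤ m) :
    (1 + 1 / (m : ℝ)) ^ k ≤ 3 := by
  have hm' : (0 : ℝ) < m := by exact_mod_cast hm
  have h1 : (1 : ℝ) ≤ 1 + 1 / (m : ℝ) := by
    have : 0 < 1 / (m : ℝ) := by positivity
    linarith
  calc (1 + 1 / (m : ℝ)) ^ k ≤ (1 + 1 / (m : ℝ)) ^ m := pow_le_pow_right₀ h1 hk
    _ ≤ (Real.exp (1 / (m : ℝ))) ^ m := by
        apply pow_le_pow_left₀ (by linarith)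
        have := Real.add_one_le_exp (1 / (m : ℝ))
        linarith
    _ = Real.exp 1 := by
        rw [← Real.exp_nat_mul]
        congr 1
        field_simp
    _ ≤ 3 := by
        have := Real.exp_one_lt_d9
        linarith

/-- Bound on the auxiliary coefficients `β_{s,t}` from the proof of Lemma 1
(Amplified SCAFFOLD).  Here `r_t = t / I` and `k_t = t % I`. -/
theorem beta_coefficient_bound
    (I P : ℕ) (hI : 0 < I) (hP : 0 < P)
    (η L : ℝ) (hη : 0 < η) (hL : 0 < L)
    (hηle : η ≤ 1 / (60 * L * I * P))
    (q₁ q₂ : ℝ)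
    (hq₁ : q₁ = 18 * η ^ 2 * L ^ 2 * I)
    (hq₂ : q₂ = 15 * η ^ 2 * L ^ 2 * I * P)
    (s : ℕ) (hs : s < P)
    (β : ℕ → ℝ)
    (hβ0 : β (s * I) = 0)
    (hβrec : ∀ t, s * I ≤ t → t < I * P →
      β (t + 1) = (1 + 1 / ((I : ℝ) * P)) * β t
        + (if s = t / I then (q₂ / P) * ((1 + 1 / (I : ℝ)) ^ (t % I) - 1) else 0)
        + q₁ * q₂ * ∑ i ∈ Finset.range (t % I - 1),
            (1 + 1 / (I : ℝ)) ^ i * β (t - 1 - i)) :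
    ∀ t, s * I ≤ t → t ≤ I * P → β t ≤ 12 * q₂ * I / P := by
  have hI' : (1 : ℝ) ≤ I := by exact_mod_cast hI
  have hP' : (1 : ℝ) ≤ P := by exact_mod_cast hP
  have hI0 : (0 : ℝ) < I := by linarith
  have hP0 : (0 : ℝ) < P := by linarith
  set M : ℝ := (I : ℝ) * P with hM
  have hM0 : 0 < M := by positivity
  have hq1 : 0 ≤ q₁ := by rw [hq₁]; positivity
  have hq2 : 0 ≤ q₂ := by rw [hq₂]; positivity
  obtain ⟨c, hc⟩ : ∃ c, c = q₂ / P := ⟨_, rfl⟩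
  have hc0 : 0 ≤ c := by rw [hc]; positivity
  obtain ⟨B, hB⟩ : ∃ B, B = 12 * c * I := ⟨_, rfl⟩
  have hB0 : 0 ≤ B := by rw [hB]; positivity
  have hBe : 12 * q₂ * I / P = B := by rw [hB, hc]; ring
  have hx : η * L * I * P ≤ 1 / 60 := by
    rw [le_div_iff₀ (by positivity)] at hηle
    linarith
  have hqq : q₁ * q₂ * (3 * I) ≤ 1 / 100 / M := by
    rw [le_div_iff₀ hM0]
    have hx4 : (η * L * I * P) ^ 4 ≤ (1 / 60) ^ 4 := pow_le_pow_left₀ (by positivity) hx 4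
    have hle : (η * L * I) ^ 4 * P ^ 2 ≤ (η * L * I * P) ^ 4 := by
      rw [mul_pow _ (P : ℝ) 4]
      exact mul_le_mul_of_nonneg_left (pow_le_pow_right₀ hP' (by norm_num)) (by positivity)
    have he : q₁ * q₂ * (3 * I) * M = 810 * ((η * L * I) ^ 4 * P ^ 2) := by
      rw [hq₁, hq₂, hM]; ring
    rw [he]
    norm_num at hx4
    linarith
  have ha1 : (1 : ℝ) ≤ 1 + 1 / M := by
    have : 0 < 1 / M := by positivity
    linarith
  have hapow : ∀ n : ℕ, n ≤ I * P → (1 + 1 / M) ^ n ≤ 3 := by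
    intro n hn
    have := one_add_pow_le_three (I * P) n (Nat.mul_pos hI hP) hn
    rwa [Nat.cast_mul] at this
  have hfin : ∀ n : ℕ, n ≤ I * P →
      (1 + 1 / M) ^ n * (2 * c * (min n I : ℕ) + 1 / 100 * B * (n / M)) ≤ B := by
    intro n hn
    have h1 : ((min n I : ℕ) : ℝ) ≤ I := by exact_mod_cast min_le_right n I
    have h2 : (n : ℝ) / M ≤ 1 := by
      rw [div_le_one hM0, hM]; exact_mod_cast hn
    have h3 : 2 * c * ((min n I : ℕ) : ℝ) ≤ 2 * c * I :=
      mul_le_mul_of_nonneg_left h1 (by positivity)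
    have h4 : 1 / 100 * B * ((n : ℝ) / M) ≤ 1 / 100 * B * 1 :=
      mul_le_mul_of_nonneg_left h2 (by positivity)
    have h5 := mul_le_mul (hapow n hn) (add_le_add h3 h4) (by positivity) (by norm_num)
    have h6 : 2 * c * I = B / 6 := by rw [hB]; ring
    rw [h6] at h5
    linarith
  have key : ∀ n : ℕ, s * I + n ≤ I * P → β (s * I + n) ≤
      (1 + 1 / M) ^ n * (2 * c * (min n I : ℕ) + 1 / 100 * B * (n / M)) := by
    intro n
    induction n using Nat.strong_induction_on with
    | _ n ih =>
      intro hn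
      rcases n with _ | n
      · simp [hβ0]
      have hle : ∀ u, s * I ≤ u → u ≤ s * I + n → β u ≤ B := by
        intro u hu1 hu2
        obtain ⟨m, rfl⟩ := Nat.exists_eq_add_of_le hu1
        exact (ih m (by omega) (by omega)).trans (hfin m (by omega))
      have hr := hβrec (s * I + n) (by omega) (by omega)
      rw [← add_assoc, hr]
      have hih := ih n (by omega) (by omega)
      have hsum : ∑ i ∈ Finset.range ((s * I + n) % I - 1),
            (1 + 1 / (I : ℝ)) ^ i * β (s * I + n - 1 - i) ≤ 3 * I * B := by
        have hmod : (s * I + n) % I = n % I := by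
          rw [add_comm, Nat.add_mul_mod_self_right]
        rw [hmod]
        have hmn : n % I ≤ n := Nat.mod_le _ _
        have hmI : n % I < I := Nat.mod_lt _ hI
        calc _ ≤ ∑ i ∈ Finset.range (n % I - 1), 3 * B := by
              apply Finset.sum_le_sum
              intro i hi
              rw [Finset.mem_range] at hi
              have h1 := hle (s * I + n - 1 - i) (by omega) (by omega)
              have h2 := one_add_pow_le_three I i hI (by omega)
              calc _ ≤ (1 + 1 / (I : ℝ)) ^ i * B :=
                    mul_le_mul_of_nonneg_left h1 (by positivity)
                _ ≤ 3 * B := mul_le_mul_of_nonneg_right h2 hB0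
          _ = ((n % I - 1 : ℕ) : ℝ) * (3 * B) := by simp
          _ ≤ I * (3 * B) := by
              apply mul_le_mul_of_nonneg_right _ (by positivity)
              exact_mod_cast (by omega : n % I - 1 ≤ I)
          _ = 3 * I * B := by ring
      have hS : q₁ * q₂ * ∑ i ∈ Finset.range ((s * I + n) % I - 1),
            (1 + 1 / (I : ℝ)) ^ i * β (s * I + n - 1 - i) ≤ 1 / 100 * B * (1 / M) := by
        calc _ ≤ q₁ * q₂ * (3 * I * B) :=
              mul_le_mul_of_nonneg_left hsum (by positivity)
          _ = q₁ * q₂ * (3 * I) * B := by ring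
          _ ≤ 1 / 100 / M * B := mul_le_mul_of_nonneg_right hqq hB0
          _ = _ := by ring
      have hind : (if s = (s * I + n) / I then
          (q₂ / P) * ((1 + 1 / (I : ℝ)) ^ ((s * I + n) % I) - 1) else 0) ≤
          2 * c * (((min (n + 1) I : ℕ) : ℝ) - (min n I : ℕ)) := by
        split_ifs with h
        · have hnI : n < I := by
            by_contra hcon
            have : (s + 1) ≤ (s * I + n) / I := by
              rw [Nat.le_div_iff_mul_le hI, add_mul]; omega
            omega
          rw [min_eq_left (by omega : n + 1 ≤ I), min_eq_left hnI.le, ← hc]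
          have h2 := one_add_pow_le_three I ((s * I + n) % I) hI (Nat.mod_lt _ hI).le
          have h3 := mul_le_mul_of_nonneg_left h2 hc0
          push_cast
          linarith
        · have : ((min n I : ℕ) : ℝ) ≤ (min (n + 1) I : ℕ) := by
            exact_mod_cast min_le_min_right I (Nat.le_succ n)
          have : 0 ≤ ((min (n + 1) I : ℕ) : ℝ) - (min n I : ℕ) := by linarith
          positivity
      have hD0 : 0 ≤ 2 * c * (((min (n + 1) I : ℕ) : ℝ) - (min n I : ℕ))
          + 1 / 100 * B * (1 / M) := by
        have : ((min n I : ℕ) : ℝ) ≤ (min (n + 1) I : ℕ) := by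
          exact_mod_cast min_le_min_right I (Nat.le_succ n)
        have : 0 ≤ ((min (n + 1) I : ℕ) : ℝ) - (min n I : ℕ) := by linarith
        positivity
      have hD := le_mul_of_one_le_left hD0 (one_le_pow₀ ha1 (n := n + 1))
      have hA := mul_le_mul_of_nonneg_left hih (by linarith : (0 : ℝ) ≤ 1 + 1 / M)
      have hE : (1 + 1 / M) ^ (n + 1) *
          (2 * c * (min (n + 1) I : ℕ) + 1 / 100 * B * ((n + 1 : ℕ) / M)) =
          (1 + 1 / M) * ((1 + 1 / M) ^ n * (2 * c * (min n I : ℕ) + 1 / 100 * B * (n / M)))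
          + (1 + 1 / M) ^ (n + 1) * (2 * c * (((min (n + 1) I : ℕ) : ℝ) - (min n I : ℕ))
          + 1 / 100 * B * (1 / M)) := by
        rw [Nat.cast_add n 1, Nat.cast_one]; ring
      rw [hE]
      linarith
  intro t ht1 ht2
  obtain ⟨n, rfl⟩ := Nat.exists_eq_add_of_le ht1
  rw [hBe]
  exact (key n ht2).trans (hfin n (by omega))
end
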